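/- Let a > 0 with a ≠ 1, and let D be the 2n×2n diagonal matrix with block form diag(a·I_n, a⁻¹·I_n). Then a matrix R that is both symplectic and orthogonal (R ∈ Sp(2n,ℝ) ∩ O(2n)) satisfies RᵀDR = D if and only if there exists X ∈ O(n) such that R is the block-diagonal matrix [[X, 0], [0, X]]. In particular, the stabilizer of D in the orthogonal symplectic group is isomorphic to O(n). -/

import Mathlib

open Matrix

/-- `J` denotes the 2n×2n real matrix with block form [[0, I_n], [−I_n, 0]]. -/
noncomputable def J (n : ℕ) : Matrix (Fin n ⊕ Fin n) (Fin n ⊕ Fin n) ℝ :=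
  Matrix.fromBlocks 0 1 (-1) 0

/-!
For orthogonal `R`, the conditions `Rᵀ M R = M` and `M R = R M` agree. So a symplectic orthogonal
matrix commutes with `J` and has the shape `[[A, B], [-B, A]]`, and it fixes `D = diag(a I, b I)`
exactly when it commutes with `D`, which forces the off-diagonal blocks to vanish as soon as
`a - b` is not a zero divisor. Orthogonality of `R` then passes to its diagonal block.
-/

theorem smul_eq_smul_iff_eq_zero {K V : Type*} [Ring K] [AddCommGroup V] [Module K V] {a b : K}
    (hab : IsSMulRegular V (a - b)) {x : V} : a • x = b • x ↔ x = 0 := by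
  rw [← sub_eq_zero, ← sub_smul]
  exact ⟨hab.right_eq_zero_of_smul, fun hx => by rw [hx, smul_zero]⟩

theorem self_ne_inv_of_pos {K : Type*} [Field K] [LinearOrder K] [IsStrictOrderedRing K]
    {a : K} (ha : 0 < a) (ha1 : a ≠ 1) : a ≠ a⁻¹ := by
  have ha_ne_neg_one : a ≠ -1 := by linarith
  simp [self_eq_inv₀, ha_ne_neg_one, ha.ne', ha1]

section Blocks

variable {m n K : Type*} [Fintype m] [Fintype n] [DecidableEq m] [DecidableEq n] [CommRing K]

theorem commute_fromBlocks_diagonal_sumElim_iff {a b : K} (hab : IsLeftRegular (a - b))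
    {A : Matrix m m K} {B : Matrix m n K} {C : Matrix n m K} {D : Matrix n n K} :
    Commute (fromBlocks A B C D) (diagonal (Sum.elim (fun _ : m => a) (fun _ : n => b))) ↔
      B = 0 ∧ C = 0 := by
  have hB : b • B = a • B ↔ B = 0 := eq_comm.trans (smul_eq_smul_iff_eq_zero hab.matrix)
  have hC : a • C = b • C ↔ C = 0 := smul_eq_smul_iff_eq_zero hab.matrix
  rw [commute_iff_eq, ← fromBlocks_diagonal, ← smul_one_eq_diagonal, ← smul_one_eq_diagonal,
    fromBlocks_multiply, fromBlocks_multiply]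
  simp [fromBlocks_inj, hB, hC]

theorem commute_fromBlocks_J_iff {A B C D : Matrix n n K} :
    Commute (fromBlocks A B C D) (Matrix.J n K) ↔ C = -B ∧ D = A := by
  have hJ : Commute (fromBlocks A B C D) (Matrix.J n K) ↔
      fromBlocks B (-A) D (-C) = fromBlocks (-C) (-D) A B := by
    simp [commute_iff_eq, Matrix.J, fromBlocks_multiply]
  rw [hJ, fromBlocks_inj]
  grind

theorem fromBlocks_zero₁₂_zero₂₁_mem_orthogonalGroup_iff {X : Matrix m m K} {Y : Matrix n n K} :
    fromBlocks X 0 0 Y ∈ orthogonalGroup (m ⊕ n) K ↔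
      X ∈ orthogonalGroup m K ∧ Y ∈ orthogonalGroup n K := by
  simp [mem_orthogonalGroup_iff', fromBlocks_transpose, fromBlocks_multiply,
    ← fromBlocks_one, fromBlocks_inj]

theorem commute_orthogonal_iff_transpose_left_conjugate {R M : Matrix n n K}
    (hR : R ∈ orthogonalGroup n K) : Commute R M ↔ Rᵀ * M * R = M :=
  letI := starRingOfComm (R := K)
  commute_unitary_iff_star_left_conjugate hR

theorem exists_eq_fromBlocks_of_symplectic_of_orthogonal
    {R : Matrix (n ⊕ n) (n ⊕ n) K} (hsymp : R ∈ symplecticGroup n K)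
    (horth : R ∈ orthogonalGroup (n ⊕ n) K) :
    ∃ A B : Matrix n n K, R = fromBlocks A B (-B) A := by
  have hJ : Commute R (Matrix.J n K) :=
    (commute_orthogonal_iff_transpose_left_conjugate horth).2
      (SymplecticGroup.mem_iff'.1 hsymp)
  rw [← fromBlocks_toBlocks R, commute_fromBlocks_J_iff] at hJ
  refine ⟨R.toBlocks₁₁, R.toBlocks₁₂, ?_⟩
  conv_lhs => rw [← fromBlocks_toBlocks R, hJ.1, hJ.2]

theorem stmt_2_general {a b : K} (hab : IsLeftRegular (a - b)) {R : Matrix (n ⊕ n) (n ⊕ n) K}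
    (hsymp : R ∈ symplecticGroup n K) (horth : R ∈ orthogonalGroup (n ⊕ n) K) :
    Rᵀ * diagonal (Sum.elim (fun _ : n => a) (fun _ : n => b)) * R
        = diagonal (Sum.elim (fun _ : n => a) (fun _ : n => b)) ↔
      ∃ X ∈ orthogonalGroup n K, R = fromBlocks X 0 0 X := by
  rw [← commute_orthogonal_iff_transpose_left_conjugate horth]
  constructor
  · intro hD
    obtain ⟨A, B, rfl⟩ :=
      exists_eq_fromBlocks_of_symplectic_of_orthogonal hsymp horth
    obtain ⟨rfl, -⟩ := (commute_fromBlocks_diagonal_sumElim_iff hab).1 hD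
    rw [neg_zero] at horth ⊢
    exact ⟨A, (fromBlocks_zero₁₂_zero₂₁_mem_orthogonalGroup_iff.1 horth).1, rfl⟩
  · rintro ⟨X, -, rfl⟩
    exact (commute_fromBlocks_diagonal_sumElim_iff hab).2 ⟨rfl, rfl⟩

end Blocks

theorem mem_symplecticGroup_iff_transpose_mul_J_mul {n : ℕ}
    {R : Matrix (Fin n ⊕ Fin n) (Fin n ⊕ Fin n) ℝ} :
    R ∈ symplecticGroup (Fin n) ℝ ↔ Rᵀ * J n * R = J n := by
  have hJ : J n = -Matrix.J (Fin n) ℝ := by simp [_root_.J, Matrix.J, fromBlocks_neg]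
  rw [SymplecticGroup.mem_iff', hJ, Matrix.mul_neg, Matrix.neg_mul, neg_inj]

/-- For `a > 0`, `a ≠ 1` and `D = diag(a·I_n, a⁻¹·I_n)`, an orthogonal symplectic
matrix `R` satisfies `Rᵀ D R = D` iff `R = diag(X, X)` for some orthogonal `X`;
thus the stabilizer of `D` in the orthogonal symplectic group is isomorphic to `O(n)`. -/
theorem stmt_2 (n : ℕ) (a : ℝ) (ha : 0 < a) (ha1 : a ≠ 1)
    (R : Matrix (Fin n ⊕ Fin n) (Fin n ⊕ Fin n) ℝ)
    (hRsymp : Rᵀ * J n * R = J n) (hRorth : Rᵀ * R = 1) :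
    Rᵀ * Matrix.diagonal (Sum.elim (fun _ : Fin n => a) (fun _ : Fin n => a⁻¹)) * R
        = Matrix.diagonal (Sum.elim (fun _ : Fin n => a) (fun _ : Fin n => a⁻¹)) ↔
      ∃ X : Matrix (Fin n) (Fin n) ℝ, Xᵀ * X = 1 ∧ R = Matrix.fromBlocks X 0 0 X := by
  simpa only [mem_orthogonalGroup_iff'] using
    stmt_2_general (IsRegular.of_ne_zero (sub_ne_zero.2 (self_ne_inv_of_pos ha ha1))).left
      (mem_symplecticGroup_iff_transpose_mul_J_mul.2 hRsymp)
      ((mem_orthogonalGroup_iff' _ _).2 hRorth)
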